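/- arXiv:2206.09567 — 3 statements merged into one kernel-verified Lean document; each statement's English description precedes it below -/
import Mathlib

section
/- (2-WL cannot count common neighbors.) There exist an unlabeled graph G = (V,E) and target links (p,q) and (p',q') in G such that (p,q) and (p',q') are 2-WL-indistinguishable, yet the number of common neighbors of p and q differs from the number of common neighbors of p' and q', i.e. |N(p) ∩ N(q)| ≠ |N(p') ∩ N(q')|. -/
open scoped Classical

universe u v

/-- The common 1-WL color type over label set `σ`:
`C 0 = σ`, `C (t+1) = C t × Multiset (C t)`. -/
def WL1Color (σ : Type u) : ℕ → Type u
  | 0 => σ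
  | t + 1 => WL1Color σ t × Multiset (WL1Color σ t)

/-- The 1-WL coloring of a labeled graph `(G, l)`:
`c¹⁰(v) = l v`, `c¹ᵗ⁺¹(v) = (c¹ᵗ(v), {{c¹ᵗ(u) : u ∈ N(v)}})`. -/
noncomputable def wl1 {σ : Type u} {V : Type v} [Fintype V] (G : SimpleGraph V)
    (l : V → σ) : (t : ℕ) → V → WL1Color σ t
  | 0 => l
  | t + 1 => fun v => (wl1 G l t v, (G.neighborFinset v).val.map (wl1 G l t))

/-- The type of initial pair colors over label set `σ`. -/
def PairColor0 (σ : Type u) : Type u := σ × σ × Bool × Bool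

/-- Initial pair color `c⁰(p,q) = (l p, l q, 1_{(p,q)∈E}, 1_{p=q})`. -/
noncomputable def pairInit {σ : Type u} {V : Type v} (G : SimpleGraph V) (l : V → σ)
    (e : V × V) : PairColor0 σ :=
  (l e.1, l e.2, decide (G.Adj e.1 e.2), decide (e.1 = e.2))

/-- The common (plain/local) 2-WL pair color type over label set `σ`. -/
def WL2Color (σ : Type u) : ℕ → Type u
  | 0 => PairColor0 σ
  | t + 1 => WL2Color σ t × Multiset (WL2Color σ t) × Multiset (WL2Color σ t)

/-- The plain 2-WL coloring:
`c₂ᵗ⁺¹(p,q) = (c₂ᵗ(p,q), {{c₂ᵗ(u,q) : u ∈ V}}, {{c₂ᵗ(p,v) : v ∈ V}})`. -/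
noncomputable def wl2 {σ : Type u} {V : Type v} [Fintype V] (G : SimpleGraph V)
    (l : V → σ) : (t : ℕ) → V × V → WL2Color σ t
  | 0 => pairInit G l
  | t + 1 => fun e =>
      (wl2 G l t e,
        Finset.univ.val.map (fun u => wl2 G l t (u, e.2)),
        Finset.univ.val.map (fun v => wl2 G l t (e.1, v)))

/-- The local 2-WL (2-WL_L) coloring:
`cₗᵗ⁺¹(p,q) = (cₗᵗ(p,q), {{cₗᵗ(u,q) : (u,q) ∈ E}}, {{cₗᵗ(p,v) : (p,v) ∈ E}})`. -/
noncomputable def wl2L {σ : Type u} {V : Type v} [Fintype V] (G : SimpleGraph V)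
    (l : V → σ) : (t : ℕ) → V × V → WL2Color σ t
  | 0 => pairInit G l
  | t + 1 => fun e =>
      (wl2L G l t e,
        (Finset.univ.filter (fun u => G.Adj u e.2)).val.map (fun u => wl2L G l t (u, e.2)),
        (Finset.univ.filter (fun v => G.Adj e.1 v)).val.map (fun v => wl2L G l t (e.1, v)))

/-- The common (plain/local) 2-FWL pair color type over label set `σ`. -/
def FWLColor (σ : Type u) : ℕ → Type u
  | 0 => PairColor0 σ
  | t + 1 => FWLColor σ t × Multiset (FWLColor σ t × FWLColor σ t)

/-- The 2-FWL coloring: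
`c_Fᵗ⁺¹(p,q) = (c_Fᵗ(p,q), {{(c_Fᵗ(u,q), c_Fᵗ(p,u)) : u ∈ V}})`. -/
noncomputable def fwl2 {σ : Type u} {V : Type v} [Fintype V] (G : SimpleGraph V)
    (l : V → σ) : (t : ℕ) → V × V → FWLColor σ t
  | 0 => pairInit G l
  | t + 1 => fun e =>
      (fwl2 G l t e,
        Finset.univ.val.map (fun u => (fwl2 G l t (u, e.2), fwl2 G l t (e.1, u))))

/-- The local 2-FWL (2-FWL_L) coloring:
`c_FLᵗ⁺¹(p,q) = (c_FLᵗ(p,q), {{(c_FLᵗ(u,q), c_FLᵗ(p,u)) : (u,q) ∈ E or (p,u) ∈ E}})`. -/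
noncomputable def fwl2L {σ : Type u} {V : Type v} [Fintype V] (G : SimpleGraph V)
    (l : V → σ) : (t : ℕ) → V × V → FWLColor σ t
  | 0 => pairInit G l
  | t + 1 => fun e =>
      (fwl2L G l t e,
        (Finset.univ.filter (fun u => G.Adj u e.2 ∨ G.Adj e.1 u)).val.map
          (fun u => (fwl2L G l t (u, e.2), fwl2L G l t (e.1, u))))

/-- A target link: an ordered pair of distinct, non-adjacent vertices. -/
def IsTargetLink {V : Type v} (G : SimpleGraph V) (e : V × V) : Prop :=
  e.1 ≠ e.2 ∧ ¬ G.Adj e.1 e.2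

/-- `(p,q)` in `(G,l)` and `(p',q')` in `(G',l')` are 1-WL-indistinguishable. -/
noncomputable def WL1Indist {σ : Type u} {V V' : Type v} [Fintype V] [Fintype V']
    (G : SimpleGraph V) (l : V → σ) (G' : SimpleGraph V') (l' : V' → σ)
    (e : V × V) (e' : V' × V') : Prop :=
  ∀ t : ℕ, wl1 G l t e.1 = wl1 G' l' t e'.1 ∧ wl1 G l t e.2 = wl1 G' l' t e'.2

/-- 2-WL-indistinguishability. -/
noncomputable def WL2Indist {σ : Type u} {V V' : Type v} [Fintype V] [Fintype V']
    (G : SimpleGraph V) (l : V → σ) (G' : SimpleGraph V') (l' : V' → σ)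
    (e : V × V) (e' : V' × V') : Prop :=
  ∀ t : ℕ, wl2 G l t e = wl2 G' l' t e'

/-- Local 2-WL (2-WL_L) indistinguishability. -/
noncomputable def WL2LIndist {σ : Type u} {V V' : Type v} [Fintype V] [Fintype V']
    (G : SimpleGraph V) (l : V → σ) (G' : SimpleGraph V') (l' : V' → σ)
    (e : V × V) (e' : V' × V') : Prop :=
  ∀ t : ℕ, wl2L G l t e = wl2L G' l' t e'

/-- 2-FWL-indistinguishability. -/
noncomputable def FWL2Indist {σ : Type u} {V V' : Type v} [Fintype V] [Fintype V']
    (G : SimpleGraph V) (l : V → σ) (G' : SimpleGraph V') (l' : V' → σ)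
    (e : V × V) (e' : V' × V') : Prop :=
  ∀ t : ℕ, fwl2 G l t e = fwl2 G' l' t e'

/-- Local 2-FWL (2-FWL_L) indistinguishability. -/
noncomputable def FWL2LIndist {σ : Type u} {V V' : Type v} [Fintype V] [Fintype V']
    (G : SimpleGraph V) (l : V → σ) (G' : SimpleGraph V') (l' : V' → σ)
    (e : V × V) (e' : V' × V') : Prop :=
  ∀ t : ℕ, fwl2L G l t e = fwl2L G' l' t e'

/-- The 0/1 labeling trick: augment the labeling with indicator of membership in `{p, q}`. -/
noncomputable def label01 {σ : Type u} {V : Type v} (l : V → σ) (e : V × V) :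
    V → σ × Bool :=
  fun v => (l v, decide (v = e.1 ∨ v = e.2))

/-- 1-WL-with-0/1-labeling indistinguishability of target links. -/
noncomputable def WL1LabelIndist {σ : Type u} {V V' : Type v} [Fintype V] [Fintype V']
    (G : SimpleGraph V) (l : V → σ) (G' : SimpleGraph V') (l' : V' → σ)
    (e : V × V) (e' : V' × V') : Prop :=
  WL1Indist G (label01 l e) G' (label01 l' e') e e'

/-- The number of common neighbors of `p` and `q` in `G`. -/
noncomputable def commonNbrCount {V : Type v} [Fintype V] (G : SimpleGraph V)
    (e : V × V) : ℕ :=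
  (G.neighborFinset e.1 ∩ G.neighborFinset e.2).card

/-- If the automorphisms act transitively on the vertices, the 2-WL color of a pair is a function
of its initial color: refinement never splits the classes `=`, adjacent, non-adjacent. -/
theorem wl2_eq_of_pairInit_eq {V : Type v} [Fintype V] (G : SimpleGraph V)
    (hG : ∀ p q : V, ∃ φ : G ≃g G, φ p = q) (t : ℕ) {e e' : V × V}
    (h : pairInit G (fun _ => ()) e = pairInit G (fun _ => ()) e') :
    wl2 G (fun _ => ()) t e = wl2 G (fun _ => ()) t e' := by
  induction t generalizing e e' with
  | zero => exact h
  | succ t ih =>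
    have map_equiv (φ : G ≃g G) (f g : V → WL2Color Unit t) (hfg : ∀ u, f u = g (φ u)) :
        (Finset.univ : Finset V).val.map f = (Finset.univ : Finset V).val.map g := by
      rw [show f = g ∘ φ from funext hfg, ← Multiset.map_map g φ]
      exact congrArg _ (Multiset.map_univ_val_equiv φ.toEquiv)
    have wl2_map (φ : G ≃g G) (p q : V) :
        wl2 G (fun _ => ()) t (p, q) = wl2 G (fun _ => ()) t (φ p, φ q) :=
      ih (by simp only [pairInit, φ.map_adj_iff, φ.injective.eq_iff]; rfl)
    obtain ⟨φ, hφ⟩ := hG e.2 e'.2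
    obtain ⟨ψ, hψ⟩ := hG e.1 e'.1
    exact Prod.ext (ih h) (Prod.ext
      (map_equiv φ _ _ fun u => by rw [wl2_map φ, hφ])
      (map_equiv ψ _ _ fun u => by rw [wl2_map ψ, hψ]))

/-- Rotations act transitively on the vertices of a cycle. -/
theorem exists_cycleGraph_iso_apply_eq (n : ℕ) (p q : Fin (n + 2)) :
    ∃ φ : SimpleGraph.cycleGraph (n + 2) ≃g SimpleGraph.cycleGraph (n + 2), φ p = q :=
  ⟨{ Equiv.addRight (q - p) with
      map_rel_iff' := by simp [SimpleGraph.cycleGraph_adj] },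
    add_sub_cancel p q⟩

/-- 2-WL cannot count common neighbors: there is a single unlabeled graph with two
2-WL-indistinguishable target links having different numbers of common neighbors. -/
theorem wl2_cannot_count_common_neighbors :
    ∃ (n : ℕ) (G : SimpleGraph (Fin n)) (e e' : Fin n × Fin n),
      IsTargetLink G e ∧ IsTargetLink G e' ∧
      WL2Indist G (fun _ => ()) G (fun _ => ()) e e' ∧
      commonNbrCount G e ≠ commonNbrCount G e' := by
  have h02 : ¬ (SimpleGraph.cycleGraph 6).Adj 0 2 := by
    rw [SimpleGraph.cycleGraph_adj]; decide
  have h03 : ¬ (SimpleGraph.cycleGraph 6).Adj 0 3 := by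
    rw [SimpleGraph.cycleGraph_adj]; decide
  refine ⟨6, SimpleGraph.cycleGraph 6, (0, 2), (0, 3), ⟨by decide, h02⟩, ⟨by decide, h03⟩,
    fun t => wl2_eq_of_pairInit_eq _ (exists_cycleGraph_iso_apply_eq 4) t
      (by simp [pairInit, h02, h03]; rfl), ?_⟩
  have hpos : 0 < commonNbrCount (SimpleGraph.cycleGraph 6) (0, 2) :=
    Finset.card_pos.2 ⟨1, by
      simp only [Finset.mem_inter, SimpleGraph.mem_neighborFinset, SimpleGraph.cycleGraph_adj]
      decide⟩
  have hzero : commonNbrCount (SimpleGraph.cycleGraph 6) (0, 3) = 0 := by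
    refine Finset.card_eq_zero.2 (Finset.eq_empty_of_forall_notMem fun u => ?_)
    simp only [Finset.mem_inter, SimpleGraph.mem_neighborFinset, SimpleGraph.cycleGraph_adj]
    revert u
    decide
  omega
end

section
/- (2-WL is blind on regular graphs: node-level symmetry makes 2-WL unable to detect differences between unconnected link pairs.) Let G = (V,E) and G' = (V',E') be unlabeled graphs that are both d-regular and both have exactly n vertices. Then for every target link (p,q) in G (p ≠ q, (p,q) ∉ E) and every target link (p',q') in G' (p' ≠ q', (p',q') ∉ E'), the links (p,q) and (p',q') are 2-WL-indistinguishable. In particular, within a single d-regular graph, any two non-adjacent pairs of distinct vertices receive identical 2-WL colors at every iteration. -/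
open scoped Classical

universe u v

/-- Two vertices of equal degree in graphs of equal order have matching neighborhoods: some
bijection of the vertex sets respects equality with and adjacency to these vertices. -/
theorem exists_equiv_eq_iff_adj_iff {V V' : Type v} [Fintype V] [Fintype V']
    {G : SimpleGraph V} {G' : SimpleGraph V'} (hcard : Fintype.card V = Fintype.card V')
    {p : V} {p' : V'} (hdeg : G.degree p = G'.degree p') :
    ∃ φ : V ≃ V', ∀ u, (p = u ↔ p' = φ u) ∧ (G.Adj p u ↔ G'.Adj p' (φ u)) := by
  have hadj : Fintype.card {u // G.Adj p u} = Fintype.card {u // G'.Adj p' u} := by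
    convert (G.card_neighborSet_eq_degree p).trans
      (hdeg.trans (G'.card_neighborSet_eq_degree p').symm) <;> rfl
  have hcompl : Fintype.card {u // ¬ G.Adj p u} = Fintype.card {u // ¬ G'.Adj p' u} := by
    rw [Fintype.card_subtype_compl, Fintype.card_subtype_compl, hcard, hadj]
  let ψ : V ≃ V' := (Equiv.sumCompl (G.Adj p)).symm.trans
    (((Fintype.equivOfCardEq hadj).sumCongr (Fintype.equivOfCardEq hcompl)).trans
      (Equiv.sumCompl (G'.Adj p')))
  have hψ : ∀ u, G.Adj p u ↔ G'.Adj p' (ψ u) := by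
    intro u
    by_cases h : G.Adj p u
    · simpa [ψ, h] using (Fintype.equivOfCardEq hadj ⟨u, h⟩).2
    · simpa [ψ, h] using (Fintype.equivOfCardEq hcompl ⟨u, h⟩).2
  clear_value ψ
  have hp : ¬ G'.Adj p' (ψ p) := fun h => G.irrefl ((hψ p).2 h)
  refine ⟨ψ.trans (Equiv.swap (ψ p) p'), fun u => ⟨?_, ?_⟩⟩
  · rw [Equiv.trans_apply, eq_comm (a := p'), Equiv.swap_apply_eq_iff, Equiv.swap_apply_right,
      ψ.apply_eq_iff_eq, eq_comm]
  · rw [hψ u, Equiv.trans_apply, Equiv.swap_apply_def]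
    split_ifs with h₁ h₂
    · simp [h₁, hp]
    · simp [h₂, hp]
    · rfl

/-- In regular graphs of the same degree and order, the 2-WL color of a pair is determined by
its equality and adjacency type. -/
theorem wl2_eq_of_eq_iff_of_adj_iff {V V' : Type v} [Fintype V] [Fintype V']
    {G : SimpleGraph V} {G' : SimpleGraph V'} {d : ℕ}
    (hcard : Fintype.card V = Fintype.card V')
    (hG : G.IsRegularOfDegree d) (hG' : G'.IsRegularOfDegree d) (t : ℕ) :
    ∀ (e : V × V) (e' : V' × V'), (e.1 = e.2 ↔ e'.1 = e'.2) →
      (G.Adj e.1 e.2 ↔ G'.Adj e'.1 e'.2) →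
      wl2 G (fun _ => ()) t e = wl2 G' (fun _ => ()) t e' := by
  induction t with
  | zero =>
    intro e e' heq hadj
    simp only [wl2, pairInit, heq, hadj]
    rfl
  | succ t ih =>
    rintro ⟨p, q⟩ ⟨p', q'⟩ heq hadj
    have hmap {f : V → WL2Color Unit t} {g : V' → WL2Color Unit t} (φ : V ≃ V')
        (h : ∀ u, f u = g (φ u)) :
        (Finset.univ : Finset V).val.map f = (Finset.univ : Finset V').val.map g := by
      rw [funext h, ← Finset.map_univ_equiv φ, Finset.map_val, Multiset.map_map]
      rfl
    obtain ⟨φ, hφ⟩ := exists_equiv_eq_iff_adj_iff (p := p) (p' := p') hcard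
      ((hG p).trans (hG' p').symm)
    obtain ⟨χ, hχ⟩ := exists_equiv_eq_iff_adj_iff (p := q) (p' := q') hcard
      ((hG q).trans (hG' q').symm)
    refine Prod.ext (ih _ _ heq hadj) (Prod.ext (hmap χ fun u => ih _ _ ?_ ?_)
      (hmap φ fun v => ih _ _ (hφ v).1 (hφ v).2))
    · rw [eq_comm, (hχ u).1, eq_comm]
    · rw [G.adj_comm, (hχ u).2, G'.adj_comm]

/-- 2-WL is blind on regular graphs: any two target links of two `d`-regular unlabeled
graphs on the same number of vertices are 2-WL-indistinguishable. -/
theorem wl2_blind_on_regular_graphs :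
    ∀ (V V' : Type v) [Fintype V] [Fintype V']
      (G : SimpleGraph V) (G' : SimpleGraph V') (n d : ℕ),
      Fintype.card V = n → Fintype.card V' = n →
      G.IsRegularOfDegree d → G'.IsRegularOfDegree d →
      ∀ (e : V × V) (e' : V' × V'),
        IsTargetLink G e → IsTargetLink G' e' →
        WL2Indist G (fun _ => ()) G' (fun _ => ()) e e' := by
  intro V V' _ _ G G' n d hn hn' hG hG' e e' he he' t
  exact wl2_eq_of_eq_iff_of_adj_iff (hn.trans hn'.symm) hG hG' t e e'
    (iff_of_false he.1 he'.1) (iff_of_false he.2 he'.2)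
end

section
/- (2-FWL is blind on strongly regular graphs, the key claim behind the magic-square counterexample in the proof of Theorem 6.) Let G and G' be strongly regular graphs with the same parameters (n, k, λ, μ), viewed as unlabeled graphs. Then for every target link (p,q) in G (p ≠ q, (p,q) ∉ E) and every target link (p',q') in G' (p' ≠ q', (p',q') ∉ E'), the links (p,q) and (p',q') are 2-FWL-indistinguishable. In particular, within a single strongly regular graph, any two non-adjacent pairs of distinct vertices receive identical 2-FWL colors at every iteration. -/
open scoped Classical

universe u v

/-- The adjacency and equality pattern of a vertex `u` relative to the ordered pair `(p, q)`. -/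
noncomputable def vertexProfile {V : Type v} (G : SimpleGraph V) (p q u : V) :
    Bool × Bool × Bool × Bool :=
  (decide (G.Adj u q), decide (u = q), decide (G.Adj p u), decide (p = u))

section

variable {V : Type v} [Fintype V] {G : SimpleGraph V} {n k lam mu : ℕ}

theorem SimpleGraph.IsSRGWith.sum_adj_left (h : G.IsSRGWith n k lam mu) (p : V) :
    ∑ u, (if G.Adj p u then (1 : ℤ) else 0) = k := by
  rw [Finset.sum_boole, ← h.regular p, ← SimpleGraph.card_neighborFinset_eq_degree,
    SimpleGraph.neighborFinset_eq_filter]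

theorem SimpleGraph.IsSRGWith.sum_adj_right (h : G.IsSRGWith n k lam mu) (q : V) :
    ∑ u, (if G.Adj u q then (1 : ℤ) else 0) = k := by
  simpa only [G.adj_comm] using h.sum_adj_left q

theorem SimpleGraph.IsSRGWith.sum_adj_adj (h : G.IsSRGWith n k lam mu) {p q : V} (hpq : p ≠ q) :
    ∑ u, (if G.Adj u q ∧ G.Adj p u then (1 : ℤ) else 0) =
      ((if G.Adj p q then lam else mu : ℕ) : ℤ) := by
  have hcard : Fintype.card (G.commonNeighbors p q) = if G.Adj p q then lam else mu := by
    split_ifs with hadj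
    · exact h.of_adj p q hadj
    · exact h.of_not_adj hpq hadj
  rw [Finset.sum_boole, ← hcard, Fintype.card_subtype]
  congr 2
  ext u
  simp [SimpleGraph.mem_commonNeighbors, G.adj_comm u q, and_comm]

theorem SimpleGraph.IsSRGWith.sum_vertexProfile_self (h : G.IsSRGWith n k lam mu) (p : V)
    (F : Bool × Bool × Bool × Bool → ℤ) :
    ∑ u, F (vertexProfile G p p u) =
      n * F (false, false, false, false)
        + k * (F (true, false, true, false) - F (false, false, false, false))
        + (F (false, true, false, true) - F (false, false, false, false)) := by
  have pointwise (u : V) : F (vertexProfile G p p u) =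
      F (false, false, false, false)
        + (if G.Adj p u then (1 : ℤ) else 0) *
          (F (true, false, true, false) - F (false, false, false, false))
        + (if u = p then (1 : ℤ) else 0) *
          (F (false, true, false, true) - F (false, false, false, false)) := by
    by_cases hu : u = p
    · subst hu
      simp [vertexProfile]
    · by_cases ha : G.Adj p u <;> simp [vertexProfile, hu, Ne.symm hu, ha, G.adj_comm u p]
  simp only [pointwise, Finset.sum_add_distrib, ← Finset.sum_mul, h.sum_adj_left]
  simp [h.card]

theorem SimpleGraph.IsSRGWith.sum_vertexProfile_of_ne (h : G.IsSRGWith n k lam mu) {p q : V}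
    (hpq : p ≠ q) (F : Bool × Bool × Bool × Bool → ℤ) :
    ∑ u, F (vertexProfile G p q u) =
      n * F (false, false, false, false)
        + k * (F (true, false, false, false) - F (false, false, false, false))
        + k * (F (false, false, true, false) - F (false, false, false, false))
        + ((if G.Adj p q then lam else mu : ℕ) : ℤ) *
          (F (true, false, true, false) - F (true, false, false, false)
            - F (false, false, true, false) + F (false, false, false, false))
        + (F (false, true, decide (G.Adj p q), false)
            - F (false, false, decide (G.Adj p q), false))
        + (F (decide (G.Adj p q), false, false, true)
            - F (decide (G.Adj p q), false, false, false)) := by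
  have pointwise (u : V) : F (vertexProfile G p q u) =
      F (false, false, false, false)
        + (if G.Adj u q then (1 : ℤ) else 0) *
          (F (true, false, false, false) - F (false, false, false, false))
        + (if G.Adj p u then (1 : ℤ) else 0) *
          (F (false, false, true, false) - F (false, false, false, false))
        + (if G.Adj u q ∧ G.Adj p u then (1 : ℤ) else 0) *
          (F (true, false, true, false) - F (true, false, false, false)
            - F (false, false, true, false) + F (false, false, false, false))
        + (if u = q then (1 : ℤ) else 0) *
          (F (false, true, decide (G.Adj p q), false)
            - F (false, false, decide (G.Adj p q), false))
        + (if u = p then (1 : ℤ) else 0) *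
          (F (decide (G.Adj p q), false, false, true)
            - F (decide (G.Adj p q), false, false, false)) := by
    by_cases huq : u = q
    · subst huq
      by_cases ha : G.Adj p u <;> simp [vertexProfile, hpq, hpq.symm, ha]
    · by_cases hup : u = p
      · subst hup
        by_cases ha : G.Adj u q <;> simp [vertexProfile, hpq, ha]
      · by_cases ha : G.Adj u q <;> by_cases hb : G.Adj p u <;>
          simp [vertexProfile, huq, hup, Ne.symm hup, ha, hb] <;> ring
  simp only [pointwise, Finset.sum_add_distrib, ← Finset.sum_mul, h.sum_adj_left,
    h.sum_adj_right, h.sum_adj_adj hpq]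
  simp [h.card]

end

section

variable {V V' : Type v} [Fintype V] [Fintype V'] {G : SimpleGraph V} {G' : SimpleGraph V'}
  {n k lam mu : ℕ}

theorem SimpleGraph.IsSRGWith.map_vertexProfile_eq (h : G.IsSRGWith n k lam mu)
    (h' : G'.IsSRGWith n k lam mu) {p q : V} {p' q' : V'} (heq : p = q ↔ p' = q')
    (hadj : G.Adj p q ↔ G'.Adj p' q') :
    (Finset.univ : Finset V).val.map (vertexProfile G p q) =
      (Finset.univ : Finset V').val.map (vertexProfile G' p' q') := by
  have sums (F : Bool × Bool × Bool × Bool → ℤ) :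
      ∑ u, F (vertexProfile G p q u) = ∑ u, F (vertexProfile G' p' q' u) := by
    by_cases hpq : p = q
    · have hpq' := heq.1 hpq
      subst hpq hpq'
      rw [h.sum_vertexProfile_self, h'.sum_vertexProfile_self]
    · rw [h.sum_vertexProfile_of_ne hpq, h'.sum_vertexProfile_of_ne (mt heq.2 hpq)]
      simp only [hadj]
  ext c
  have hc := sums fun d => if c = d then 1 else 0
  simp only [Finset.sum_boole, Nat.cast_inj] at hc
  simpa only [Multiset.count_map, Finset.card_def, Finset.filter_val] using hc

/-- In strongly regular graphs with equal parameters, 2-FWL colors depend only on equality and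
adjacency of the pair. -/
theorem SimpleGraph.IsSRGWith.fwl2_eq (h : G.IsSRGWith n k lam mu)
    (h' : G'.IsSRGWith n k lam mu) (t : ℕ) :
    ∀ {p q : V} {p' q' : V'}, (p = q ↔ p' = q') → (G.Adj p q ↔ G'.Adj p' q') →
      fwl2 G (fun _ => ()) t (p, q) = fwl2 G' (fun _ => ()) t (p', q') := by
  induction t with
  | zero =>
    intro p q p' q' heq hadj
    simp only [fwl2, pairInit, heq, hadj]
    rfl
  | succ t ih =>
    intro p q p' q' heq hadj
    refine Prod.ext (ih heq hadj) ?_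
    have hrel := h.map_vertexProfile_eq h' heq hadj
    rw [← Multiset.rel_eq, Multiset.rel_map] at hrel
    change Multiset.map _ _ = Multiset.map _ _
    rw [← Multiset.rel_eq, Multiset.rel_map]
    refine hrel.mono fun u _ u' _ hu => ?_
    simp only [vertexProfile, Prod.mk.injEq, decide_eq_decide] at hu
    obtain ⟨hadjq, heqq, hadjp, heqp⟩ := hu
    exact Prod.ext (ih heqq hadjq) (ih heqp hadjp)

end

/-- 2-FWL is blind on strongly regular graphs: any two target links of two strongly
regular unlabeled graphs with the same parameters `(n, k, λ, μ)` are
2-FWL-indistinguishable. -/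
theorem fwl2_blind_on_strongly_regular_graphs :
    ∀ (V V' : Type v) [Fintype V] [Fintype V']
      (G : SimpleGraph V) (G' : SimpleGraph V') (n k lam mu : ℕ),
      G.IsSRGWith n k lam mu → G'.IsSRGWith n k lam mu →
      ∀ (e : V × V) (e' : V' × V'),
        IsTargetLink G e → IsTargetLink G' e' →
        FWL2Indist G (fun _ => ()) G' (fun _ => ()) e e' := by
  intro V V' _ _ G G' n k lam mu h h' e e' he he' t
  exact h.fwl2_eq h' t (iff_of_false he.1 he'.1) (iff_of_false he.2 he'.2)
end
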